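/- Let d ≥ 3 and let I = I_3(H) ⊆ S = ℂ[m_0,…,m_d]. Let ≼ be a monomial order on the exponent vectors of S such that for every choice of columns 1 ≤ i < j < k ≤ d, the leading monomial of the corresponding 3×3 minor of H with respect to ≼ is its antidiagonal monomial, i.e., the product of the (1,k), (2,j) and (3,i) entries of H (for example, the degree reverse lexicographic order with m_0 > m_1 > ⋯ > m_d has this property). Then the 3×3 minors of H form a Gröbner basis of I with respect to ≼: for every nonzero f ∈ I, the leading monomial of f is divisible by the leading monomial of some 3×3 minor of H. -/

import Mathlib

open MvPolynomial

/-- The `3 × d` matrix `H` of the inverse Gaussian moment variety: its first column is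
`(m₀², 0, m₁²)ᵀ`, and its `c`-th column, for `2 ≤ c ≤ d`, is
`(m_{c-2}, (2c-3)·m_{c-1}, m_c)ᵀ`.  Columns are indexed by `Fin d`, with `c : Fin d`
corresponding to the paper's column `c + 1`. -/
noncomputable def invGaussMatrix (d : ℕ) :
    Matrix (Fin 3) (Fin d) (MvPolynomial (Fin (d + 1)) ℂ) :=
  Matrix.of fun r c =>
    if c.val = 0 then
      ![X ⟨0, by omega⟩ ^ 2, 0, X ⟨1, by have := c.isLt; omega⟩ ^ 2] r
    else
      ![X ⟨c.val - 1, by have := c.isLt; omega⟩,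
        C (2 * (c.val : ℂ) - 1) * X ⟨c.val, by have := c.isLt; omega⟩,
        X ⟨c.val + 1, by have := c.isLt; omega⟩] r

/-- The ideal `I₃(H)` generated by all `3 × 3` minors of `H`, i.e. determinants of
submatrices obtained by choosing `3` of the `d` columns. -/
noncomputable def invGaussIdeal (d : ℕ) : Ideal (MvPolynomial (Fin (d + 1)) ℂ) :=
  Ideal.span
    { p | ∃ s : Fin 3 → Fin d, StrictMono s ∧ p = ((invGaussMatrix d).submatrix id s).det }


namespace InvGaussProof

/-- The strict part of `le`. -/
def slt {E : Type*} (le : E → E → Prop) (a b : E) : Prop := le a b ∧ ¬ le b a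

/-- The axioms of a monomial order. -/
structure MonOrd {n : ℕ} (le : (Fin n →₀ ℕ) → (Fin n →₀ ℕ) → Prop) : Prop where
  lin : IsLinearOrder _ le
  add : ∀ a b c, le a b → le (a + c) (b + c)
  zero : ∀ a, le 0 a

namespace MonOrd

variable {n : ℕ} {le : (Fin n →₀ ℕ) → (Fin n →₀ ℕ) → Prop}

theorem refl (h : MonOrd le) (a) : le a a := h.lin.refl a

theorem trans (h : MonOrd le) {a b c} (h1 : le a b) (h2 : le b c) : le a c :=
  h.lin.trans a b c h1 h2

theorem antisymm (h : MonOrd le) {a b} (h1 : le a b) (h2 : le b a) : a = b :=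
  h.lin.antisymm a b h1 h2

theorem total (h : MonOrd le) (a b) : le a b ∨ le b a := h.lin.total a b

theorem le_of_add (h : MonOrd le) {a b c} (h1 : le (a + c) (b + c)) : le a b := by
  rcases h.total a b with h2 | h2
  · exact h2
  · have := h.antisymm h1 (h.add _ _ c h2)
    have := add_right_cancel this
    subst this
    exact h2

theorem slt_add_iff (h : MonOrd le) {a b} (c) : slt le (a + c) (b + c) ↔ slt le a b :=
  ⟨fun h1 => ⟨h.le_of_add h1.1, fun h2 => h1.2 (h.add _ _ _ h2)⟩,
    fun h1 => ⟨h.add _ _ _ h1.1, fun h2 => h1.2 (h.le_of_add h2)⟩⟩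

theorem slt_trans (h : MonOrd le) {a b c} (h1 : slt le a b) (h2 : slt le b c) : slt le a c :=
  ⟨h.trans h1.1 h2.1, fun h3 => h1.2 (h.trans h2.1 h3)⟩

theorem slt_of_le_slt (h : MonOrd le) {a b c} (h1 : le a b) (h2 : slt le b c) : slt le a c :=
  ⟨h.trans h1 h2.1, fun h3 => h2.2 (h.trans h3 h1)⟩

theorem slt_of_le_ne (h : MonOrd le) {a b} (h1 : le a b) (h2 : a ≠ b) : slt le a b :=
  ⟨h1, fun h3 => h2 (h.antisymm h1 h3)⟩

theorem le_of_le (h : MonOrd le) {a b : Fin n →₀ ℕ} (h1 : a ≤ b) : le a b := by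
  have := h.add 0 (b - a) a (h.zero _)
  rwa [zero_add, tsub_add_cancel_of_le h1] at this

theorem wf (h : MonOrd le) : WellFounded (slt le) := by
  have : IsPreorder _ le := h.lin.toIsPreorder
  refine WellQuasiOrdered.wellFounded (r := le) ?_
  intro f
  obtain ⟨i, j, hij, hle⟩ := (wellQuasiOrdered_le (α := Fin n →₀ ℕ)) f
  exact ⟨i, j, hij, h.le_of_le hle⟩

end MonOrd

/-- Span of the multiples of the `G t` whose expected leading exponent satisfies `P`. -/
noncomputable def genSpan {n : ℕ} {ι : Type*} (G : ι → MvPolynomial (Fin n) ℂ) (L : ι → (Fin n →₀ ℕ))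
    (P : (Fin n →₀ ℕ) → Prop) : Submodule ℂ (MvPolynomial (Fin n) ℂ) :=
  Submodule.span ℂ {p | ∃ β t, P (β + L t) ∧ p = monomial β 1 * G t}

section Abstract

variable {n : ℕ} {le : (Fin n →₀ ℕ) → (Fin n →₀ ℕ) → Prop} {ι : Type*}
  {G : ι → MvPolynomial (Fin n) ℂ} {L : ι → (Fin n →₀ ℕ)}

theorem genSpan_mono {P Q : (Fin n →₀ ℕ) → Prop} (h : ∀ a, P a → Q a) :
    genSpan G L P ≤ genSpan G L Q :=
  Submodule.span_mono (by rintro p ⟨β, t, h1, h2⟩; exact ⟨β, t, h _ h1, h2⟩)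

theorem genSpan_bound (h : MonOrd le) {P : (Fin n →₀ ℕ) → Prop} {f}
    (hf : f ∈ genSpan G L P) :
    f = 0 ∨ ∃ w, P w ∧ f ∈ genSpan G L (fun a => le a w) := by
  induction hf using Submodule.span_induction with
  | mem x hx =>
    obtain ⟨β, t, h1, h2⟩ := hx
    exact Or.inr ⟨_, h1, Submodule.subset_span ⟨β, t, h.refl _, h2⟩⟩
  | zero => exact Or.inl rfl
  | add x y _ _ hx hy =>
    rcases hx with rfl | ⟨w, hw, hx⟩
    · rw [zero_add]; exact hy
    rcases hy with rfl | ⟨v, hv, hy⟩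
    · rw [add_zero]; exact Or.inr ⟨w, hw, hx⟩
    rcases h.total w v with hwv | hwv
    · exact Or.inr ⟨v, hv, add_mem (genSpan_mono (fun a ha => h.trans ha hwv) hx) hy⟩
    · exact Or.inr ⟨w, hw, add_mem hx (genSpan_mono (fun a ha => h.trans ha hwv) hy)⟩
  | smul c x _ hx =>
    rcases hx with rfl | ⟨w, hw, hx⟩
    · exact Or.inl (smul_zero _)
    · exact Or.inr ⟨w, hw, Submodule.smul_mem _ _ hx⟩

theorem mem_genSpan_of_ideal {f} (hf : f ∈ Ideal.span (Set.range G)) :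
    f ∈ genSpan G L (fun _ => True) := by
  induction hf using Submodule.span_induction with
  | mem x hx =>
    obtain ⟨t, rfl⟩ := hx
    exact Submodule.subset_span ⟨0, t, trivial, by simp⟩
  | zero => exact zero_mem _
  | add x y _ _ hx hy => exact add_mem hx hy
  | smul p x hx0 hx =>
    clear hx0
    rw [smul_eq_mul]
    induction p using MvPolynomial.induction_on' with
    | add p q hp hq => rw [add_mul]; exact add_mem hp hq
    | monomial u a =>
      induction hx using Submodule.span_induction with
      | mem x hx =>
        obtain ⟨β, t, -, rfl⟩ := hx
        have : monomial u a * (monomial β 1 * G t) = a • (monomial (u + β) 1 * G t) := by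
          rw [← mul_assoc, monomial_mul, mul_one, ← smul_mul_assoc, smul_monomial]
          simp
        rw [this]
        exact Submodule.smul_mem _ _ (Submodule.subset_span ⟨u + β, t, trivial, rfl⟩)
      | zero => rw [mul_zero]; exact zero_mem _
      | add x y _ _ hx hy => rw [mul_add]; exact add_mem hx hy
      | smul c x _ hx => rw [mul_smul_comm]; exact Submodule.smul_mem _ _ hx

theorem support_gen (h : MonOrd le) (hL : ∀ s, ∀ b ∈ (G s).support, le b (L s)) (β t) :
    ∀ b ∈ (monomial β 1 * G t).support, le b (β + L t) := by
  intro b hb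
  rw [mem_support_iff, coeff_monomial_mul'] at hb
  split_ifs at hb with h1
  · rw [one_mul] at hb
    have := h.add _ _ β (hL t _ (mem_support_iff.2 hb))
    rwa [tsub_add_cancel_of_le h1, add_comm] at this
  · exact absurd rfl hb

theorem support_slt (h : MonOrd le) (hL : ∀ s, ∀ b ∈ (G s).support, le b (L s)) {w g}
    (hg : g ∈ genSpan G L (fun a => slt le a w)) : ∀ b ∈ g.support, slt le b w := by
  induction hg using Submodule.span_induction with
  | mem x hx =>
    obtain ⟨β, t, h1, rfl⟩ := hx
    intro b hb
    exact h.slt_of_le_slt (support_gen h hL β t b hb) h1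
  | zero => simp
  | add x y _ _ hx hy =>
    intro b hb
    rcases Finset.mem_union.1 (support_add hb) with h1 | h1
    · exact hx b h1
    · exact hy b h1
  | smul c x _ hx =>
    intro b hb
    exact hx b (support_smul hb)

theorem groebner_aux (h : MonOrd le)
    (hc : ∀ s, coeff (L s) (G s) ≠ 0)
    (hL : ∀ s, ∀ b ∈ (G s).support, le b (L s))
    (conn : ∀ w s s', L s ≤ w → L s' ≤ w → ∃ c : ℂ,
      monomial (w - L s) 1 * G s - c • (monomial (w - L s') 1 * G s') ∈
        genSpan G L (fun a => slt le a w))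
    (w : Fin n →₀ ℕ) : ∀ f ∈ genSpan G L (fun a => le a w), f ≠ 0 →
    ∃ m ∈ f.support, (∀ b ∈ f.support, le b m) ∧ ∃ s, L s ≤ m := by
  induction w using h.wf.induction with
  | _ w ih =>
  intro f hf hf0
  have low : f ∈ genSpan G L (fun a => slt le a w) →
      ∃ m ∈ f.support, (∀ b ∈ f.support, le b m) ∧ ∃ s, L s ≤ m := by
    intro hf'
    rcases genSpan_bound h hf' with h0 | ⟨v, hv, hfv⟩
    · exact absurd h0 hf0
    · exact ih v hv f hfv hf0
  by_cases hs : ∃ s, L s ≤ w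
  · obtain ⟨s, hs⟩ := hs
    have key : f ∈ Submodule.span ℂ {monomial (w - L s) 1 * G s} ⊔
        genSpan G L (fun a => slt le a w) := by
      refine (Submodule.span_le.2 ?_ : genSpan G L (fun a => le a w) ≤ _) hf
      rintro p ⟨β, t, h1, rfl⟩
      by_cases h2 : β + L t = w
      · have ht : L t ≤ w := h2 ▸ le_add_self
        obtain ⟨c, hcc⟩ := conn w t s ht hs
        have hβ : w - L t = β := by rw [← h2, add_tsub_cancel_right]
        rw [hβ] at hcc
        refine Submodule.mem_sup.2 ⟨_, Submodule.smul_mem _ c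
          (Submodule.mem_span_singleton_self _), _, hcc, ?_⟩
        abel
      · exact Submodule.mem_sup_right (Submodule.subset_span
          ⟨β, t, h.slt_of_le_ne h1 h2, rfl⟩)
    obtain ⟨y, hy, g, hg, hfg⟩ := Submodule.mem_sup.1 key
    obtain ⟨c, rfl⟩ := Submodule.mem_span_singleton.1 hy
    by_cases hc0 : c = 0
    · apply low
      rw [← hfg, hc0, zero_smul, zero_add]
      exact hg
    · have hgs := support_slt h hL hg
      have hgw : coeff w g = 0 := by
        by_contra h3
        have := hgs w (mem_support_iff.2 h3)
        exact this.2 this.1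
      refine ⟨w, ?_, ?_, s, hs⟩
      · rw [mem_support_iff, ← hfg, coeff_add, hgw, add_zero, coeff_smul, coeff_monomial_mul',
          if_pos tsub_le_self, tsub_tsub_cancel_of_le hs, one_mul, smul_eq_mul]
        exact mul_ne_zero hc0 (hc s)
      · intro b hb
        rw [← hfg] at hb
        rcases Finset.mem_union.1 (support_add hb) with h1 | h1
        · have := support_gen h hL _ _ b (support_smul h1)
          rwa [tsub_add_cancel_of_le hs] at this
        · exact (hgs b h1).1
  · apply low
    refine (Submodule.span_le.2 ?_ : genSpan G L (fun a => le a w) ≤ _) hf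
    rintro p ⟨β, t, h1, rfl⟩
    refine Submodule.subset_span ⟨β, t, h.slt_of_le_ne h1 ?_, rfl⟩
    intro h2
    exact hs ⟨t, h2 ▸ le_add_self⟩

theorem groebner (h : MonOrd le)
    (hc : ∀ s, coeff (L s) (G s) ≠ 0)
    (hL : ∀ s, ∀ b ∈ (G s).support, le b (L s))
    (conn : ∀ w s s', L s ≤ w → L s' ≤ w → ∃ c : ℂ,
      monomial (w - L s) 1 * G s - c • (monomial (w - L s') 1 * G s') ∈
        genSpan G L (fun a => slt le a w))
    {f} (hf : f ∈ Ideal.span (Set.range G)) (hf0 : f ≠ 0) :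
    ∃ m ∈ f.support, (∀ b ∈ f.support, le b m) ∧ ∃ s, L s ≤ m := by
  rcases genSpan_bound h (mem_genSpan_of_ideal (L := L) hf) with h0 | ⟨w, -, hw⟩
  · exact absurd h0 hf0
  · exact groebner_aux h hc hL conn w f hw hf0

end Abstract

section Concrete

variable {d : ℕ}

/-- Exponent vector of the entry in row 0, column `c`. -/
noncomputable def r0 (c : Fin d) : Fin (d + 1) →₀ ℕ :=
  Finsupp.equivFunOnFinite.symm fun x =>
    if c.val = 0 then (if x.val = 0 then 2 else 0) else (if x.val + 1 = c.val then 1 else 0)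

/-- Exponent vector of the entry in row 1, column `c`. -/
noncomputable def r1 (c : Fin d) : Fin (d + 1) →₀ ℕ :=
  Finsupp.equivFunOnFinite.symm fun x => if x.val = c.val then 1 else 0

/-- Exponent vector of the entry in row 2, column `c`. -/
noncomputable def r2 (c : Fin d) : Fin (d + 1) →₀ ℕ :=
  Finsupp.equivFunOnFinite.symm fun x =>
    if c.val = 0 then (if x.val = 1 then 2 else 0) else (if x.val = c.val + 1 then 1 else 0)

theorem r0_apply (c : Fin d) (x) : r0 c x =
    if c.val = 0 then (if x.val = 0 then 2 else 0) else (if x.val + 1 = c.val then 1 else 0) := rfl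

theorem r1_apply (c : Fin d) (x) : r1 c x = if x.val = c.val then 1 else 0 := rfl

theorem r2_apply (c : Fin d) (x) : r2 c x =
    if c.val = 0 then (if x.val = 1 then 2 else 0) else (if x.val = c.val + 1 then 1 else 0) := rfl

/-- Coefficient of the entry in row 1, column `c`. -/
noncomputable def kap (c : Fin d) : ℂ := if c.val = 0 then 0 else 2 * (c.val : ℂ) - 1

theorem kap_ne {c : Fin d} (h : 0 < c.val) : kap c ≠ 0 := by
  unfold kap
  rw [if_neg h.ne']
  intro h1
  have h2 : (2 * c.val : ℂ) = 1 := by linear_combination h1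
  have h3 : 2 * c.val = 1 := by exact_mod_cast h2
  omega

theorem kap_zero {c : Fin d} (h : c.val = 0) : kap c = 0 := if_pos h

/-- Row 0 of the matrix. -/
noncomputable def H0 (c : Fin d) : MvPolynomial (Fin (d + 1)) ℂ := monomial (r0 c) 1
/-- Row 1 of the matrix. -/
noncomputable def H1 (c : Fin d) : MvPolynomial (Fin (d + 1)) ℂ := monomial (r1 c) (kap c)
/-- Row 2 of the matrix. -/
noncomputable def H2 (c : Fin d) : MvPolynomial (Fin (d + 1)) ℂ := monomial (r2 c) 1

theorem mat0 (c : Fin d) : invGaussMatrix d 0 c = H0 c := by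
  unfold invGaussMatrix H0
  by_cases h : c.val = 0
  · simp only [Matrix.of_apply, h, if_true, Matrix.cons_val_zero]
    rw [X_pow_eq_monomial]
    refine congrArg (fun e => monomial e (_ : ℂ)) ?_
    ext x
    simp only [r0_apply, Finsupp.single_apply, Fin.ext_iff, h]
    grind
  · simp only [Matrix.of_apply, h, if_false, Matrix.cons_val_zero, X]
    refine congrArg (fun e => monomial e (_ : ℂ)) ?_
    ext x
    simp only [r0_apply, Finsupp.single_apply, Fin.ext_iff, h]
    grind

theorem mat1 (c : Fin d) : invGaussMatrix d 1 c = H1 c := by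
  unfold invGaussMatrix H1
  by_cases h : c.val = 0
  · simp [h, kap_zero h]
  · simp only [Matrix.of_apply, h, if_false, Matrix.cons_val_one, Matrix.cons_val_zero, X]
    rw [C_mul_monomial, mul_one, kap, if_neg h]
    refine congrArg (fun e => monomial e (_ : ℂ)) ?_
    ext x
    simp only [r1_apply, Finsupp.single_apply, Fin.ext_iff]
    grind

theorem mat2 (c : Fin d) : invGaussMatrix d 2 c = H2 c := by
  unfold invGaussMatrix H2
  by_cases h : c.val = 0
  · simp only [Matrix.of_apply, h, if_true, Matrix.cons_val]
    rw [X_pow_eq_monomial]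
    refine congrArg (fun e => monomial e (_ : ℂ)) ?_
    ext x
    simp only [r2_apply, Finsupp.single_apply, Fin.ext_iff, h]
    grind
  · simp only [Matrix.of_apply, h, if_false, Matrix.cons_val, X]
    refine congrArg (fun e => monomial e (_ : ℂ)) ?_
    ext x
    simp only [r2_apply, Finsupp.single_apply, Fin.ext_iff, h]
    grind

/-- The minor on columns `i, j, k`. -/
noncomputable def D (i j k : Fin d) : MvPolynomial (Fin (d + 1)) ℂ :=
  H0 i * H1 j * H2 k - H0 i * H1 k * H2 j - H0 j * H1 i * H2 k + H0 j * H1 k * H2 i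
    + H0 k * H1 i * H2 j - H0 k * H1 j * H2 i

/-- The antidiagonal exponent of the minor on columns `i, j, k`. -/
noncomputable def Ld (i j k : Fin d) : Fin (d + 1) →₀ ℕ := r0 k + r1 j + r2 i

theorem det_eq (s : Fin 3 → Fin d) :
    ((invGaussMatrix d).submatrix id s).det = D (s 0) (s 1) (s 2) := by
  rw [Matrix.det_fin_three]
  simp only [Matrix.submatrix_apply, id, mat0, mat1, mat2, D]

theorem anti_eq (i j k : Fin d) : H0 k * H1 j * H2 i = monomial (Ld i j k) (kap j) := by
  simp only [H0, H1, H2, Ld, monomial_mul, one_mul, mul_one]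

theorem D_eq (i j k : Fin d) : D i j k =
    monomial (r0 i + r1 j + r2 k) (kap j) - monomial (r0 i + r1 k + r2 j) (kap k)
    - monomial (r0 j + r1 i + r2 k) (kap i) + monomial (r0 j + r1 k + r2 i) (kap k)
    + monomial (r0 k + r1 i + r2 j) (kap i) - monomial (r0 k + r1 j + r2 i) (kap j) := by
  simp only [D, H0, H1, H2, monomial_mul, one_mul, mul_one]

/-- The leading term hypothesis. -/
def LeadHyp (d : ℕ) (le : (Fin (d + 1) →₀ ℕ) → (Fin (d + 1) →₀ ℕ) → Prop) : Prop :=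
  ∀ i j k : Fin d, i < j → j < k →
    coeff (Ld i j k) (D i j k) ≠ 0 ∧ ∀ b, coeff b (D i j k) ≠ 0 → le b (Ld i j k)

variable {le : (Fin (d + 1) →₀ ℕ) → (Fin (d + 1) →₀ ℕ) → Prop}

theorem ne_of_apply {a b : Fin (d + 1) →₀ ℕ} (x : Fin (d + 1)) (h : a x ≠ b x) : a ≠ b := by
  rintro rfl; exact h rfl

theorem A01 (h : MonOrd le) (hl : LeadHyp d le) {j k : Fin d} (hj : 0 < j.val) (hjk : j < k) :
    slt le (r0 j + r1 k) (r0 k + r1 j) := by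
  have hd : 0 < d := by have := j.isLt; omega
  have hjk' : j.val < k.val := hjk
  have hk := k.isLt
  let z : Fin d := ⟨0, hd⟩
  have hz : z.val = 0 := rfl
  rw [← h.slt_add_iff (r2 z)]
  have n1 : r0 k + r1 j + r2 z ≠ r0 j + r1 k + r2 z := by
    apply ne_of_apply ⟨k.val, by omega⟩
    simp only [Finsupp.add_apply, r0_apply, r1_apply, r2_apply, hz]
    grind
  refine h.slt_of_le_ne ((hl z j k hj hjk).2 _ ?_) n1.symm
  have n2 : r0 z + r1 j + r2 k ≠ r0 j + r1 k + r2 z := by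
    apply ne_of_apply ⟨0, by omega⟩
    simp only [Finsupp.add_apply, r0_apply, r1_apply, r2_apply, hz]
    grind
  have n3 : r0 z + r1 k + r2 j ≠ r0 j + r1 k + r2 z := by
    apply ne_of_apply ⟨0, by omega⟩
    simp only [Finsupp.add_apply, r0_apply, r1_apply, r2_apply, hz]
    grind
  rw [D_eq]
  simp only [coeff_add, coeff_sub, coeff_monomial, kap_zero hz, n1, n2, n3, if_false, if_true,
    ite_self]
  simpa using kap_ne (c := k) (by omega)

theorem C2 (h : MonOrd le) (hl : LeadHyp d le) {j k l : Fin d} (hj : 0 < j.val) (hjk : j < k)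
    (hkl : k < l) : slt le (r0 k + r1 j + r2 l) (r0 l + r1 k + r2 j) := by
  have hjk' : j.val < k.val := hjk
  have hkl' : k.val < l.val := hkl
  have hk := l.isLt
  have n0 : r0 j + r1 k + r2 l ≠ r0 k + r1 j + r2 l := by
    apply ne_of_apply ⟨k.val, by omega⟩
    simp only [Finsupp.add_apply, r0_apply, r1_apply, r2_apply]
    grind
  have aux : ∀ a b c : Fin d, a ≤ l → b ≤ l → c < l → r0 a + r1 b + r2 c ≠ r0 k + r1 j + r2 l := by
    intro a b c ha0 hb0 hc
    have ha2 : a.val ≤ l.val := ha0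
    have hb' : b.val ≤ l.val := hb0
    have hc' : c.val < l.val := hc
    have ha := a.isLt
    have hb := b.isLt
    apply ne_of_apply ⟨l.val + 1, by omega⟩
    simp only [Finsupp.add_apply, r0_apply, r1_apply, r2_apply]
    grind
  have n1 := aux j l k (hjk.trans hkl).le le_rfl hkl
  have n2 := aux k l j hkl.le le_rfl (hjk.trans hkl)
  have n3 := aux l j k le_rfl (hjk.trans hkl).le hkl
  have n4 := aux l k j le_rfl hkl.le (hjk.trans hkl)
  refine h.slt_of_le_ne ((hl j k l hjk hkl).2 _ ?_) n4.symm
  rw [D_eq]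
  simp only [coeff_add, coeff_sub, coeff_monomial, n0, n1, n2, n3, n4, if_false, if_true]
  simpa using kap_ne hj

theorem r0_succ {c c' : Fin d} (_h : 0 < c.val) (hc : c'.val = c.val + 1) : r0 c' = r1 c := by
  ext x
  simp only [r0_apply, r1_apply, hc]
  grind

theorem r1_succ {c c' : Fin d} (h : 0 < c.val) (hc : c'.val = c.val + 1) : r1 c' = r2 c := by
  ext x
  simp only [r1_apply, r2_apply, hc]
  grind

theorem A12 (h : MonOrd le) (hl : LeadHyp d le) {j k l : Fin d} (hj : 0 < j.val) (hjk : j < k)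
    (hkl : k < l) : slt le (r1 j + r2 k) (r1 k + r2 j) := by
  have hjk' : j.val < k.val := hjk
  have hkl' : k.val < l.val := hkl
  have hk := l.isLt
  have := A01 h hl (j := ⟨j.val + 1, by omega⟩) (k := ⟨k.val + 1, by omega⟩) (by simp)
    (by simpa using hjk)
  rwa [r0_succ hj (c' := ⟨j.val + 1, by omega⟩) rfl,
    r0_succ (hj.trans hjk') (c' := ⟨k.val + 1, by omega⟩) rfl,
    r1_succ hj (c' := ⟨j.val + 1, by omega⟩) rfl,
    r1_succ (hj.trans hjk') (c' := ⟨k.val + 1, by omega⟩) rfl] at this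

theorem slt_add_add (h : MonOrd le) {a b c e} (h1 : slt le a b) (h2 : slt le c e) :
    slt le (a + c) (b + e) := by
  have h3 := (h.slt_add_iff c).2 h1
  have h4 := (h.slt_add_iff b).2 h2
  rw [add_comm c b, add_comm e b] at h4
  exact h.slt_trans h3 h4

theorem C1 (h : MonOrd le) (hl : LeadHyp d le) {i j k : Fin d} (hij : i < j)
    (hjk : j < k) : slt le (r0 i + r1 k + r2 j) (r0 k + r1 j + r2 i) := by
  have hij' : i.val < j.val := hij
  have hjk' : j.val < k.val := hjk
  have hk := k.isLt
  by_cases hi : 0 < i.val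
  · have h1 := A01 h hl hi (hij.trans hjk)
    have h2 := A12 h hl hi hij hjk
    rw [← h.slt_add_iff (r1 i)]
    convert slt_add_add h h1 h2 using 1 <;> abel
  · let o : Fin d := ⟨1, by omega⟩
    let j' : Fin d := ⟨j.val + 1, by omega⟩
    have h1 := A01 h hl (j := o) (k := k) Nat.one_pos (Fin.lt_def.2 (by simp only [o]; omega))
    have h2 := A01 h hl (j := o) (k := j') Nat.one_pos
      (Fin.lt_def.2 (by simp only [o, j']; omega))
    rw [r0_succ (c := j) (c' := j') (by omega) rfl,
      r1_succ (c := j) (c' := j') (by omega) rfl] at h2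
    have e0 : r0 i = r0 o + r0 o := by
      ext x
      simp only [Finsupp.add_apply, r0_apply, o]
      grind
    have e2 : r2 i = r1 o + r1 o := by
      ext x
      simp only [Finsupp.add_apply, r1_apply, r2_apply, o]
      grind
    rw [e0, e2]
    convert slt_add_add h h1 h2 using 1 <;> abel

/-- Increasing triples of columns. -/
abbrev Trip (d : ℕ) : Type := {t : Fin d × Fin d × Fin d // t.1 < t.2.1 ∧ t.2.1 < t.2.2}

/-- Minor of a triple. -/
noncomputable def GT (t : Trip d) : MvPolynomial (Fin (d + 1)) ℂ := D t.1.1 t.1.2.1 t.1.2.2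
/-- Antidiagonal exponent of a triple. -/
noncomputable def LT (t : Trip d) : Fin (d + 1) →₀ ℕ := Ld t.1.1 t.1.2.1 t.1.2.2

/-- The part below `w`. -/
noncomputable abbrev Vl (le : (Fin (d + 1) →₀ ℕ) → (Fin (d + 1) →₀ ℕ) → Prop)
    (w : Fin (d + 1) →₀ ℕ) : Submodule ℂ (MvPolynomial (Fin (d + 1)) ℂ) :=
  genSpan (GT (d := d)) LT (fun a => slt le a w)

theorem mem_Vl {w β : Fin (d + 1) →₀ ℕ} {i j k : Fin d} (hij : i < j) (hjk : j < k)
    (hw : slt le (β + Ld i j k) w) (c : ℂ) : monomial β c * D i j k ∈ Vl le w := by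
  have : monomial β c * D i j k = c • (monomial β 1 * GT (⟨(i, j, k), hij, hjk⟩ : Trip d)) := by
    rw [← smul_mul_assoc, smul_monomial, smul_eq_mul, mul_one]; rfl
  rw [this]
  exact Submodule.smul_mem _ _ (Submodule.subset_span ⟨β, ⟨(i, j, k), hij, hjk⟩, hw, rfl⟩)

theorem mon0 (γ : Fin (d + 1) →₀ ℕ) (c : Fin d) :
    monomial (γ + r0 c) (1 : ℂ) = monomial γ 1 * H0 c := by
  rw [H0, monomial_mul, one_mul]

theorem mon1 (γ : Fin (d + 1) →₀ ℕ) (c : Fin d) :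
    monomial (γ + r1 c) (kap c) = monomial γ 1 * H1 c := by
  rw [H1, monomial_mul, one_mul]

theorem mon2 (γ : Fin (d + 1) →₀ ℕ) (c : Fin d) :
    monomial (γ + r2 c) (1 : ℂ) = monomial γ 1 * H2 c := by
  rw [H2, monomial_mul, one_mul]

theorem edge0 (h : MonOrd le) (hl : LeadHyp d le) {i j k l : Fin d} (hij : i < j) (hjk : j < k)
    (hkl : k < l) (γ : Fin (d + 1) →₀ ℕ) :
    monomial (γ + r0 l) 1 * D i j k - monomial (γ + r0 k) 1 * D i j l ∈
      Vl le (γ + (r0 k + r0 l + r1 j + r2 i)) := by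
  have e : monomial (γ + r0 l) 1 * D i j k - monomial (γ + r0 k) 1 * D i j l =
      monomial (γ + r0 i) 1 * D j k l - monomial (γ + r0 j) 1 * D i k l := by
    simp only [mon0, D]; ring
  rw [e]
  refine sub_mem (mem_Vl hjk hkl ?_ _) (mem_Vl (hij.trans hjk) hkl ?_ _)
  · have := (h.slt_add_iff (γ + r0 l)).2 (C1 h hl hij hjk)
    convert this using 1
    · simp only [Ld]; abel
    · abel
  · have := (h.slt_add_iff (γ + r0 l + r2 i)).2
      (A01 h hl (lt_of_le_of_lt (Nat.zero_le _) hij) hjk)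
    convert this using 1
    · simp only [Ld]; abel
    · abel

theorem edge1 (h : MonOrd le) (hl : LeadHyp d le) {i j k l : Fin d} (hij : i < j) (hjk : j < k)
    (hkl : k < l) (γ : Fin (d + 1) →₀ ℕ) :
    monomial (γ + r1 k) (kap k) * D i j l - monomial (γ + r1 j) (kap j) * D i k l ∈
      Vl le (γ + (r0 l + r1 j + r1 k + r2 i)) := by
  have e : monomial (γ + r1 k) (kap k) * D i j l - monomial (γ + r1 j) (kap j) * D i k l =
      monomial (γ + r1 l) (kap l) * D i j k - monomial (γ + r1 i) (kap i) * D j k l := by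
    simp only [mon1, D]; ring
  have hj : 0 < j.val := lt_of_le_of_lt (Nat.zero_le _) hij
  rw [e]
  refine sub_mem (mem_Vl hij hjk ?_ _) ?_
  · have := (h.slt_add_iff (γ + r1 j + r2 i)).2 (A01 h hl (hj.trans hjk) hkl)
    convert this using 1
    · simp only [Ld]; abel
    · abel
  · by_cases hi : 0 < i.val
    · refine mem_Vl hjk hkl ?_ _
      have := (h.slt_add_iff (γ + r0 l + r1 k)).2 (A12 h hl hi hij hjk)
      convert this using 1
      · simp only [Ld]; abel
      · abel
    · rw [kap_zero (by omega), monomial_zero, zero_mul]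
      exact zero_mem _

theorem edge2 (h : MonOrd le) (hl : LeadHyp d le) {i j k l : Fin d} (hij : i < j) (hjk : j < k)
    (hkl : k < l) (γ : Fin (d + 1) →₀ ℕ) :
    monomial (γ + r2 j) 1 * D i k l - monomial (γ + r2 i) 1 * D j k l ∈
      Vl le (γ + (r0 l + r1 k + r2 i + r2 j)) := by
  have e : monomial (γ + r2 j) 1 * D i k l - monomial (γ + r2 i) 1 * D j k l =
      monomial (γ + r2 k) 1 * D i j l - monomial (γ + r2 l) 1 * D i j k := by
    simp only [mon2, D]; ring
  have hj : 0 < j.val := lt_of_le_of_lt (Nat.zero_le _) hij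
  rw [e]
  refine sub_mem (mem_Vl hij (hjk.trans hkl) ?_ _) (mem_Vl hij hjk ?_ _)
  · have := (h.slt_add_iff (γ + r0 l + r2 i)).2 (A12 h hl hj hjk hkl)
    convert this using 1
    · simp only [Ld]; abel
    · abel
  · have := (h.slt_add_iff (γ + r2 i)).2 (C2 h hl hj hjk hkl)
    convert this using 1
    · simp only [Ld]; abel
    · abel

/-- Two triples give proportional elements modulo the part below `w`. -/
def EqMod (le : (Fin (d + 1) →₀ ℕ) → (Fin (d + 1) →₀ ℕ) → Prop) (w : Fin (d + 1) →₀ ℕ)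
    (s t : Trip d) : Prop :=
  ∃ c : ℂ, c ≠ 0 ∧
    monomial (w - LT s) 1 * GT s - c • (monomial (w - LT t) 1 * GT t) ∈ Vl le w

theorem EqMod.rfl0 {w} (s : Trip d) : EqMod le w s s :=
  ⟨1, one_ne_zero, by rw [one_smul, sub_self]; exact zero_mem _⟩

theorem EqMod.symm {w} {s t : Trip d} (h : EqMod le w s t) : EqMod le w t s := by
  obtain ⟨c, hc, h⟩ := h
  refine ⟨c⁻¹, inv_ne_zero hc, ?_⟩
  have := Submodule.smul_mem _ (-c⁻¹) h
  rwa [smul_sub, neg_smul, neg_smul, smul_smul, inv_mul_cancel₀ hc, one_smul, sub_neg_eq_add,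
    neg_add_eq_sub] at this

theorem EqMod.trans {w} {s t u : Trip d} (h : EqMod le w s t) (h' : EqMod le w t u) :
    EqMod le w s u := by
  obtain ⟨c, hc, h⟩ := h
  obtain ⟨c', hc', h'⟩ := h'
  refine ⟨c * c', mul_ne_zero hc hc', ?_⟩
  have := add_mem h (Submodule.smul_mem _ c h')
  rwa [smul_sub, smul_smul, sub_add_sub_cancel] at this

/-- Constructor for triples. -/
abbrev mk (i j k : Fin d) (hij : i < j) (hjk : j < k) : Trip d := ⟨(i, j, k), hij, hjk⟩

theorem lt_k (h : MonOrd le) (hl : LeadHyp d le) {w} {i j k l : Fin d} (hij : i < j)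
    (hjk : j < k) (hkl : k < l) (h1 : Ld i j k ≤ w) (h2 : Ld i j l ≤ w) :
    EqMod le w (mk i j k hij hjk) (mk i j l hij (hjk.trans hkl)) := by
  have hw : r0 k + r0 l + r1 j + r2 i ≤ w := by
    intro x
    have h1 := h1 x
    have h2 := h2 x
    rw [Fin.lt_def] at hij hjk hkl
    simp only [Ld, Finsupp.add_apply, r0_apply, r1_apply, r2_apply] at h1 h2 ⊢
    grind
  obtain ⟨γ, rfl⟩ := exists_add_of_le hw
  rw [add_comm]
  refine ⟨1, one_ne_zero, ?_⟩
  have := edge0 h hl hij hjk hkl γ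
  have e1 : γ + (r0 k + r0 l + r1 j + r2 i) - Ld i j k = γ + r0 l :=
    tsub_eq_of_eq_add (by simp only [Ld]; abel)
  have e2 : γ + (r0 k + r0 l + r1 j + r2 i) - Ld i j l = γ + r0 k :=
    tsub_eq_of_eq_add (by simp only [Ld]; abel)
  simpa only [LT, GT, e1, e2, one_smul] using this

theorem lt_j (h : MonOrd le) (hl : LeadHyp d le) {w} {i j k l : Fin d} (hij : i < j)
    (hjk : j < k) (hkl : k < l) (h1 : Ld i j l ≤ w) (h2 : Ld i k l ≤ w) :
    EqMod le w (mk i j l hij (hjk.trans hkl)) (mk i k l (hij.trans hjk) hkl) := by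
  have hw : r0 l + r1 j + r1 k + r2 i ≤ w := by
    intro x
    have h1 := h1 x
    have h2 := h2 x
    rw [Fin.lt_def] at hij hjk hkl
    simp only [Ld, Finsupp.add_apply, r0_apply, r1_apply, r2_apply] at h1 h2 ⊢
    grind
  obtain ⟨γ, rfl⟩ := exists_add_of_le hw
  rw [add_comm]
  have hj : 0 < j.val := lt_of_le_of_lt (Nat.zero_le _) hij
  have kj := kap_ne hj
  have kk := kap_ne (hj.trans hjk)
  refine ⟨(kap k)⁻¹ * kap j, mul_ne_zero (inv_ne_zero kk) kj, ?_⟩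
  have := Submodule.smul_mem _ (kap k)⁻¹ (edge1 h hl hij hjk hkl γ)
  have e1 : γ + (r0 l + r1 j + r1 k + r2 i) - Ld i j l = γ + r1 k :=
    tsub_eq_of_eq_add (by simp only [Ld]; abel)
  have e2 : γ + (r0 l + r1 j + r1 k + r2 i) - Ld i k l = γ + r1 j :=
    tsub_eq_of_eq_add (by simp only [Ld]; abel)
  simp only [LT, GT, e1, e2]
  rwa [smul_sub, ← smul_mul_assoc, ← smul_mul_assoc, smul_monomial, smul_monomial, smul_eq_mul,
    smul_eq_mul, inv_mul_cancel₀ kk, ← mul_one ((kap k)⁻¹ * kap j), ← smul_eq_mul (_ * _),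
    ← smul_monomial, smul_mul_assoc] at this

theorem lt_i (h : MonOrd le) (hl : LeadHyp d le) {w} {i j k l : Fin d} (hij : i < j)
    (hjk : j < k) (hkl : k < l) (h1 : Ld i k l ≤ w) (h2 : Ld j k l ≤ w) :
    EqMod le w (mk i k l (hij.trans hjk) hkl) (mk j k l hjk hkl) := by
  have hw : r0 l + r1 k + r2 i + r2 j ≤ w := by
    intro x
    have h1 := h1 x
    have h2 := h2 x
    rw [Fin.lt_def] at hij hjk hkl
    simp only [Ld, Finsupp.add_apply, r0_apply, r1_apply, r2_apply] at h1 h2 ⊢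
    grind
  obtain ⟨γ, rfl⟩ := exists_add_of_le hw
  rw [add_comm]
  refine ⟨1, one_ne_zero, ?_⟩
  have := edge2 h hl hij hjk hkl γ
  have e1 : γ + (r0 l + r1 k + r2 i + r2 j) - Ld i k l = γ + r2 j :=
    tsub_eq_of_eq_add (by simp only [Ld]; abel)
  have e2 : γ + (r0 l + r1 k + r2 i + r2 j) - Ld j k l = γ + r2 i :=
    tsub_eq_of_eq_add (by simp only [Ld]; abel)
  simpa only [LT, GT, e1, e2, one_smul] using this

theorem same_jk (h : MonOrd le) (hl : LeadHyp d le) {w} {i i' j k : Fin d} (hij : i < j)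
    (hij' : i' < j) (hjk : j < k) (h1 : Ld i j k ≤ w) (h2 : Ld i' j k ≤ w) :
    EqMod le w (mk i j k hij hjk) (mk i' j k hij' hjk) := by
  rcases lt_trichotomy i i' with h3 | rfl | h3
  · exact lt_i h hl h3 hij' hjk h1 h2
  · exact EqMod.rfl0 _
  · exact (lt_i h hl h3 hij hjk h2 h1).symm

theorem same_k_lt (h : MonOrd le) (hl : LeadHyp d le) {w} {i i' j j' k : Fin d} (hij : i < j)
    (hij' : i' < j') (hjk : j < k) (hjk' : j' < k) (hjj : j < j')
    (h1 : Ld i j k ≤ w) (h2 : Ld i' j' k ≤ w) :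
    EqMod le w (mk i j k hij hjk) (mk i' j' k hij' hjk') := by
  have h3 : Ld i j' k ≤ w := by
    intro x
    have h1 := h1 x
    have h2 := h2 x
    rw [Fin.lt_def] at hij hjk hij' hjk' hjj
    simp only [Ld, Finsupp.add_apply, r0_apply, r1_apply, r2_apply] at h1 h2 ⊢
    grind
  exact (lt_j h hl hij hjj hjk' h1 h3).trans (same_jk h hl _ _ _ h3 h2)

theorem same_k (h : MonOrd le) (hl : LeadHyp d le) {w} {i i' j j' k : Fin d} (hij : i < j)
    (hij' : i' < j') (hjk : j < k) (hjk' : j' < k)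
    (h1 : Ld i j k ≤ w) (h2 : Ld i' j' k ≤ w) :
    EqMod le w (mk i j k hij hjk) (mk i' j' k hij' hjk') := by
  rcases lt_trichotomy j j' with h3 | rfl | h3
  · exact same_k_lt h hl _ _ _ _ h3 h1 h2
  · exact same_jk h hl _ _ _ h1 h2
  · exact (same_k_lt h hl _ _ _ _ h3 h2 h1).symm

theorem all_lt (h : MonOrd le) (hl : LeadHyp d le) {w} {i i' j j' k k' : Fin d} (hij : i < j)
    (hij' : i' < j') (hjk : j < k) (hjk' : j' < k') (hkk : k < k')
    (h1 : Ld i j k ≤ w) (h2 : Ld i' j' k' ≤ w) :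
    EqMod le w (mk i j k hij hjk) (mk i' j' k' hij' hjk') := by
  have h3 : Ld i j k' ≤ w := by
    intro x
    have h1 := h1 x
    have h2 := h2 x
    rw [Fin.lt_def] at hij hjk hij' hjk' hkk
    simp only [Ld, Finsupp.add_apply, r0_apply, r1_apply, r2_apply] at h1 h2 ⊢
    grind
  exact (lt_k h hl hij hjk hkk h1 h3).trans (same_k h hl _ _ _ _ h3 h2)

theorem all_eq (h : MonOrd le) (hl : LeadHyp d le) {w} (s t : Trip d) (h1 : LT s ≤ w)
    (h2 : LT t ≤ w) : EqMod le w s t := by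
  obtain ⟨⟨i, j, k⟩, hij, hjk⟩ := s
  obtain ⟨⟨i', j', k'⟩, hij', hjk'⟩ := t
  simp only at hij hjk hij' hjk'
  simp only [LT] at h1 h2
  rcases lt_trichotomy k k' with h3 | rfl | h3
  · exact all_lt h hl hij hij' hjk hjk' h3 h1 h2
  · exact same_k h hl hij hij' hjk hjk' h1 h2
  · exact (all_lt h hl hij' hij hjk' hjk h3 h2 h1).symm

end Concrete

end InvGaussProof

/-- The `3 × 3` minors of `H` form a Gröbner basis of `I₃(H)` with respect to any monomial
order for which the leading monomial of each minor is its antidiagonal monomial (the unique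
monomial of the product of the `(1,k)`, `(2,j)`, `(3,i)` entries of `H` for columns
`i < j < k`): for every nonzero `f ∈ I₃(H)`, the leading monomial of `f` (the `≼`-largest
element of its support) is divisible by the antidiagonal monomial of some minor. -/
theorem invGauss_groebnerBasis (d : ℕ) (hd : 3 ≤ d)
    (le : (Fin (d + 1) →₀ ℕ) → (Fin (d + 1) →₀ ℕ) → Prop)
    (hlin : IsLinearOrder _ le)
    (hadd : ∀ a b c : Fin (d + 1) →₀ ℕ, le a b → le (a + c) (b + c))
    (hzero : ∀ a : Fin (d + 1) →₀ ℕ, le 0 a)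
    (hlead : ∀ s : Fin 3 → Fin d, StrictMono s →
      ∀ a ∈ (invGaussMatrix d 0 (s 2) * invGaussMatrix d 1 (s 1)
          * invGaussMatrix d 2 (s 0)).support,
        a ∈ (((invGaussMatrix d).submatrix id s).det).support ∧
          ∀ b ∈ (((invGaussMatrix d).submatrix id s).det).support, le b a)
    (f : MvPolynomial (Fin (d + 1)) ℂ) (hf : f ∈ invGaussIdeal d) (hf0 : f ≠ 0) :
    ∃ lmf ∈ f.support, (∀ b ∈ f.support, le b lmf) ∧
      ∃ s : Fin 3 → Fin d, StrictMono s ∧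
        ∃ a ∈ (invGaussMatrix d 0 (s 2) * invGaussMatrix d 1 (s 1)
            * invGaussMatrix d 2 (s 0)).support,
          ∀ i : Fin (d + 1), a i ≤ lmf i := by
  have hM : InvGaussProof.MonOrd le := ⟨hlin, hadd, hzero⟩
  have hanti : ∀ i j k : Fin d, invGaussMatrix d 0 k * invGaussMatrix d 1 j
      * invGaussMatrix d 2 i = monomial (InvGaussProof.Ld i j k) (InvGaussProof.kap j) := by
    intro i j k
    rw [InvGaussProof.mat0, InvGaussProof.mat1, InvGaussProof.mat2, InvGaussProof.anti_eq]
  have hmono : ∀ i j k : Fin d, i < j → j < k → StrictMono ![i, j, k] := by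
    intro i j k hij hjk
    rw [Fin.strictMono_iff_lt_succ]
    intro a
    fin_cases a
    · exact hij
    · exact hjk
  have hmem : ∀ i j k : Fin d, i < j → InvGaussProof.Ld i j k ∈ (invGaussMatrix d 0 k
      * invGaussMatrix d 1 j * invGaussMatrix d 2 i).support := by
    intro i j k hij
    rw [hanti, mem_support_iff, coeff_monomial, if_pos rfl]
    exact InvGaussProof.kap_ne (lt_of_le_of_lt (Nat.zero_le _) hij)
  have hl : InvGaussProof.LeadHyp d le := by
    intro i j k hij hjk
    have h := hlead ![i, j, k] (hmono i j k hij hjk) _ (hmem i j k hij)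
    rw [InvGaussProof.det_eq] at h
    exact ⟨mem_support_iff.1 h.1, fun b hb => h.2 b (mem_support_iff.2 hb)⟩
  have hf' : f ∈ Ideal.span (Set.range (InvGaussProof.GT (d := d))) := by
    refine Ideal.span_mono ?_ hf
    rintro p ⟨s, hs, rfl⟩
    rw [InvGaussProof.det_eq]
    exact ⟨⟨(s 0, s 1, s 2), hs (by decide), hs (by decide)⟩, rfl⟩
  obtain ⟨m, hm, hmax, ⟨⟨⟨i, j, k⟩, hij, hjk⟩, ht⟩⟩ :=
    InvGaussProof.groebner (L := InvGaussProof.LT) hM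
      (fun s => (hl _ _ _ s.2.1 s.2.2).1)
      (fun s b hb => (hl _ _ _ s.2.1 s.2.2).2 b (mem_support_iff.1 hb))
      (fun w s s' h1 h2 => by
        obtain ⟨c, -, hc⟩ := InvGaussProof.all_eq hM hl s s' h1 h2
        exact ⟨c, hc⟩) hf' hf0
  exact ⟨m, hm, hmax, ![i, j, k], hmono i j k hij hjk, _, hmem i j k hij, ht⟩
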